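/- Let n ≥ 4, 2 ≤ a ≤ n−2, m ≥ 1, V = ℂ^{n+1}. For a general symmetric m-multilinear map M : V^m → Λ^aV (i.e., off the zero set of some nonzero polynomial in the coefficients of M), there is no nonzero v ∈ V with M(v,…,v) ∧ v = 0 in Λ^{a+1}V; that is, a general such tensor has no eigenvectors. -/

import Mathlib

open MvPolynomial ExteriorAlgebra

/-- The basis wedge `e_S = e_{j_1} ∧ ⋯ ∧ e_{j_b}` (indices of `S` in increasing order),
as an element of the exterior algebra of `ℂ^k`. -/
noncomputable def eWedge (k : ℕ) (S : Finset (Fin k)) : ExteriorAlgebra ℂ (Fin k → ℂ) :=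
  ((S.sort (· ≤ ·)).map fun j => ExteriorAlgebra.ι ℂ (Pi.single j (1:ℂ))).prod

/-- The value `M(v^m) ∈ Λ^b ℂ^k` of the tensor `M ∈ Hom(S^m ℂ^k, Λ^b ℂ^k)` represented by
the family of polynomials `q = (q_S)_{|S| = b}`, namely `Σ_S q_S(v) · e_S`. -/
noncomputable def tval (k b : ℕ)
    (q : {S : Finset (Fin k) // S.card = b} → MvPolynomial (Fin k) ℂ)
    (v : Fin k → ℂ) : ExteriorAlgebra ℂ (Fin k → ℂ) :=
  ∑ S : {S : Finset (Fin k) // S.card = b}, MvPolynomial.eval v (q S) • eWedge k S.1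

/-!
Contracting `M(v^m) ∧ v = 0` on the right with the coordinate form of `e_i` and reading off the
coefficients of the `e_S` with `i ∉ S` gives `n.choose a` equations which are linear in the
coefficients of `M` and polynomial in `v`. On the chart `v_i = 1`, the equation at `S` contains the
coefficient of `x_i ^ m` in `q_S` with factor `1` and those of the other `q_T`, `i ∉ T`, not at all.
These coefficients are therefore polynomial functions of the remaining ones and of the `n` affine
coordinates of `v`. As `n < n.choose a`, the tensors with an eigenvector in the chart lie in the
image of a polynomial map from an affine space of smaller dimension, hence in a hypersurface.
-/

section GenericPoints

open Matrix

variable {R σ β τ : Type*} [CommRing R] [IsDomain R]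

theorem exists_ne_zero_eval_eval_eq_zero_of_card_lt [Finite σ] [Finite τ]
    (h : Nat.card τ < Nat.card σ) (F : σ → MvPolynomial τ R) :
    ∃ D : MvPolynomial σ R, D ≠ 0 ∧ ∀ y : τ → R, eval (fun s => eval y (F s)) D = 0 := by
  suffices ∃ D : MvPolynomial σ R, D ≠ 0 ∧ aeval F D = 0 by
    obtain ⟨D, hD, hDF⟩ := this
    refine ⟨D, hD, fun y => ?_⟩
    have hDFy := congrArg (aeval y) hDF
    rwa [comp_aeval_apply, map_zero, aeval_eq_eval, aeval_eq_eval] at hDFy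
  by_contra! hD
  have hF : AlgebraicIndependent R F :=
    algebraicIndependent_iff.mpr fun p hp => by_contra fun hp0 => hD p hp0 hp
  have hcard := hF.lift_cardinalMk_le_trdeg
  simp only [MvPolynomial.trdeg_of_isDomain, ← Nat.cast_card, Cardinal.lift_natCast,
    Nat.cast_le] at hcard
  omega

theorem exists_ne_zero_eval_eq_zero_of_submatrix_eq_one [Fintype σ] [Finite τ] [Finite β]
    [DecidableEq β] (hcard : Nat.card τ < Nat.card β) {A : Matrix β σ (MvPolynomial τ R)}
    {f : β → σ} (hA : A.submatrix id f = 1) :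
    ∃ D : MvPolynomial σ R, D ≠ 0 ∧
      ∀ (c : σ → R) (x : τ → R), A.map (eval x) *ᵥ c = 0 → eval c D = 0 := by
  classical
  have := Fintype.ofFinite β
  have hAf (b b' : β) : A b (f b') = (1 : Matrix β β _) b b' := congr_fun₂ hA b b'
  have hf : Function.Injective f := fun b b' h => by
    by_contra hne
    simpa [h, hAf, Matrix.one_apply_ne hne] using hAf b b
  -- `P` fixes the kernel of `A` and ignores the coordinates in the range of `f`.
  let E : Matrix σ β (MvPolynomial τ R) := .of fun s b => (1 : Matrix σ σ _) s (f b)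
  let P : Matrix σ σ (MvPolynomial τ R) := 1 - E * A
  have hP (s : σ) (b : β) : P s (f b) = 0 := by
    simp [P, E, Matrix.mul_apply, hAf, Matrix.one_apply]
  have hPc {c : σ → R} {x : τ → R} (h : A.map (eval x) *ᵥ c = 0) : P.map (eval x) *ᵥ c = c := by
    simp [P, Matrix.map_sub, Matrix.map_mul, Matrix.sub_mulVec, ← Matrix.mulVec_mulVec, h]
  let F (s : σ) : MvPolynomial (↥(Set.range f)ᶜ ⊕ τ) R :=
    ∑ t : ↥(Set.range f)ᶜ, rename Sum.inr (P s t) * X (Sum.inl t)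
  have hcard' : Nat.card (↥(Set.range f)ᶜ ⊕ τ) < Nat.card σ := by
    have := Set.ncard_add_ncard_compl (Set.range f)
    rw [← Nat.card_coe_set_eq, ← Nat.card_coe_set_eq, Nat.card_range_of_injective hf] at this
    rw [Nat.card_sum]
    omega
  obtain ⟨D, hD, hDF⟩ := exists_ne_zero_eval_eval_eq_zero_of_card_lt hcard' F
  refine ⟨D, hD, fun c x h => ?_⟩
  have hF (s : σ) : eval (Sum.elim (fun t : ↥(Set.range f)ᶜ => c t) x) (F s) = c s := by
    calc eval (Sum.elim (fun t : ↥(Set.range f)ᶜ => c t) x) (F s)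
        = ∑ t : ↥(Set.range f)ᶜ, eval x (P s t) * c t := by simp [F, eval_rename]
      _ = (P.map (eval x) *ᵥ c) s :=
        Fintype.sum_of_injective _ Subtype.val_injective _ _ (by simp [hP]) fun _ => rfl
      _ = c s := congr_fun (hPc h) s
  simpa only [hF] using hDF (Sum.elim (fun t : ↥(Set.range f)ᶜ => c t) x)

end GenericPoints

section HomogeneousPolynomials

/-- The exponents of the monomials of degree `m` in the variables `I`, with the degree condition
written as in the coefficient index of the tensors. -/
abbrev DegreeExponent (I : Type*) (m : ℕ) : Type _ :=
  {μ : I →₀ ℕ // (μ.sum fun _ e => e) = m}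

instance finite_degreeExponent (I : Type*) [Finite I] (m : ℕ) : Finite (DegreeExponent I m) :=
  Finsupp.finite_of_degree_eq m

variable {R I : Type*} [CommSemiring R] {m : ℕ} {p : MvPolynomial I R}

theorem eq_sum_monomial_of_isHomogeneous [Fintype (DegreeExponent I m)] (hp : p.IsHomogeneous m) :
    p = ∑ μ : DegreeExponent I m, monomial μ.1 (coeff μ.1 p) := by
  classical
  ext d
  simp only [coeff_sum, coeff_monomial]
  by_cases hd : (d.sum fun _ e => e) = m
  · rw [Fintype.sum_eq_single ⟨d, hd⟩ fun μ hμ => if_neg (Subtype.coe_ne_coe.mpr hμ), if_pos rfl]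
  · rw [hp.coeff_eq_zero hd, Finset.sum_eq_zero fun μ _ => if_neg ?_]
    rintro rfl
    exact hd μ.2

theorem eval_smul_of_isHomogeneous (hp : p.IsHomogeneous m) (c : R) (v : I → R) :
    eval (c • v) p = c ^ m * eval v p := by
  rw [eval_eq, eval_eq, Finset.mul_sum]
  refine Finset.sum_congr rfl fun μ hμ => ?_
  have hdeg : ∑ j ∈ μ.support, μ j = m := (hp.degree_eq_sum_deg_support hμ).symm
  simp only [Pi.smul_apply, smul_eq_mul, mul_pow, Finset.prod_mul_distrib,
    Finset.prod_pow_eq_pow_sum, hdeg]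
  ring

end HomogeneousPolynomials

section Contraction

open Module

variable {R M I : Type*} [CommRing R] [AddCommGroup M] [Module R M] [LinearOrder I]

theorem contractRight_ιMulti_eq_zero {d : Dual R M} {n : ℕ} {v : Fin n → M}
    (hv : ∀ l, d (v l) = 0) :
    CliffordAlgebra.contractRight (Q := 0) (ιMulti R n v) d = 0 := by
  induction n with
  | zero => simp [ιMulti_apply]
  | succ n ih =>
    have hlast : ιMulti R (n + 1) v =
        ιMulti R n (fun l => v l.castSucc) * ι R (v (Fin.last n)) := by
      simp only [ιMulti_apply, List.ofFn_succ', List.prod_concat]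
    rw [hlast, CliffordAlgebra.contractRight_mul_ι, hv, ih fun l => hv l.castSucc, zero_smul,
      zero_mul, sub_zero]

theorem contractRight_basis_mul_ι (b : Basis I R M) {i : I} {T : Finset I} (hi : i ∉ T) (v : M) :
    CliffordAlgebra.contractRight (Q := 0) (b.ExteriorAlgebra T * ι R v) (b.coord i) =
      b.coord i v • b.ExteriorAlgebra T := by
  have hT : CliffordAlgebra.contractRight (Q := 0) (b.ExteriorAlgebra T) (b.coord i) = 0 := by
    rw [ExteriorAlgebra.basis_apply]
    refine contractRight_ιMulti_eq_zero fun l => ?_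
    rw [Function.comp_apply, Basis.coord_apply, Basis.repr_self]
    refine Finsupp.single_eq_of_ne fun h => hi ?_
    rw [h]
    exact Finset.orderEmbOfFin_mem _ _ l
  rw [CliffordAlgebra.contractRight_mul_ι, hT, zero_mul, sub_zero]

/-- The linear form sending `v` to the coefficient of `e_S` in the right contraction of `e_T ∧ v`
with the `i`-th coordinate form. -/
noncomputable def wedgeContractionCoord (b : Basis I R M) (i : I) (S T : Finset I) : Dual R M :=
  b.ExteriorAlgebra.coord S ∘ₗ (CliffordAlgebra.contractRight (Q := 0)).flip (b.coord i) ∘ₗ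
    LinearMap.mulLeft R (b.ExteriorAlgebra T) ∘ₗ ι R

theorem wedgeContractionCoord_of_notMem (b : Basis I R M) {i : I} (S : Finset I) {T : Finset I}
    (hi : i ∉ T) (v : M) :
    wedgeContractionCoord b i S T v = if T = S then b.coord i v else 0 := by
  change b.ExteriorAlgebra.coord S
    (CliffordAlgebra.contractRight (Q := 0) (b.ExteriorAlgebra T * ι R v) (b.coord i)) = _
  rw [contractRight_basis_mul_ι b hi, map_smul, Basis.coord_apply b.ExteriorAlgebra,
    Basis.repr_self_apply, smul_ite, smul_eq_mul, mul_one, smul_zero]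

theorem sum_mul_wedgeContractionCoord_eq_zero (b : Basis I R M) {κ : Type*} [Fintype κ]
    {c : κ → R} {T : κ → Finset I} {v : M}
    (h : (∑ k, c k • b.ExteriorAlgebra (T k)) * ι R v = 0) (i : I) (S : Finset I) :
    ∑ k, c k * wedgeContractionCoord b i S (T k) v = 0 := by
  have h' := congrArg (fun w =>
    b.ExteriorAlgebra.coord S (CliffordAlgebra.contractRight (Q := 0) w (b.coord i))) h
  simp only [Finset.sum_mul, smul_mul_assoc, map_sum, map_smul, LinearMap.sum_apply,
    LinearMap.smul_apply, map_zero, LinearMap.zero_apply, smul_eq_mul] at h'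
  exact h'

end Contraction

section EigenvectorEquations

variable {R : Type*} [CommRing R] {n a m : ℕ}

/-- The value at `v` of the tensor with component polynomials `q_S`, over an arbitrary ring. -/
noncomputable def tensorValue {I : Type*} [Fintype I] [LinearOrder I]
    (q : {S : Finset I // S.card = a} → MvPolynomial I R) (v : I → R) :
    ExteriorAlgebra R (I → R) :=
  ∑ S, eval v (q S) • (Pi.basisFun R I).ExteriorAlgebra S.1

theorem tensorValue_smul {I : Type*} [Fintype I] [LinearOrder I]
    {q : {S : Finset I // S.card = a} → MvPolynomial I R} (hq : ∀ S, (q S).IsHomogeneous m)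
    (c : R) (v : I → R) : tensorValue q (c • v) = c ^ m • tensorValue q v := by
  simp only [tensorValue, eval_smul_of_isHomogeneous (hq _), Finset.smul_sum, smul_smul]

/-- The index of the coefficient of `x_i ^ m` in the component `q_S`, for `i ∉ S`; such `S` are
encoded as subsets of `Fin n` through `i.succAbove`. -/
noncomputable def purePowerIndex (m : ℕ) (i : Fin (n + 1))
    (S : {S : Finset (Fin n) // S.card = a}) :
    {S : Finset (Fin (n + 1)) // S.card = a} × DegreeExponent (Fin (n + 1)) m :=
  (⟨S.1.map i.succAboveEmb, by rw [Finset.card_map, S.2]⟩, ⟨Finsupp.single i m, by simp⟩)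

/-- The matrix of the linear equations satisfied by the coefficients of a tensor of degree `m`
having the generic point as eigenvector: row `S` is the coefficient of `e_S` in the right
contraction of `M(v^m) ∧ v` with the `i`-th coordinate form. -/
noncomputable def eigenvectorMatrix (R : Type*) [CommRing R] (a m : ℕ) (i : Fin (n + 1)) :
    Matrix {S : Finset (Fin n) // S.card = a}
      ({S : Finset (Fin (n + 1)) // S.card = a} × DegreeExponent (Fin (n + 1)) m)
      (MvPolynomial (Fin (n + 1)) R) :=
  .of fun S t =>
    (∑ j, C (wedgeContractionCoord (Pi.basisFun R _) i (S.1.map i.succAboveEmb) t.1.1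
      (Pi.single j 1)) * X j) * monomial t.2.1 1

open Matrix in
theorem eigenvectorMatrix_mulVec_coeff_eq_zero [Fintype (DegreeExponent (Fin (n + 1)) m)]
    {q : {S : Finset (Fin (n + 1)) // S.card = a} → MvPolynomial (Fin (n + 1)) R}
    (hq : ∀ S, (q S).IsHomogeneous m) {v : Fin (n + 1) → R} (h : tensorValue q v * ι R v = 0)
    (i : Fin (n + 1)) :
    (eigenvectorMatrix R a m i).map (eval v) *ᵥ (fun t => coeff t.2.1 (q t.1)) = 0 := by
  ext S
  let form (T : {S : Finset (Fin (n + 1)) // S.card = a}) :=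
    wedgeContractionCoord (Pi.basisFun R _) i (S.1.map i.succAboveEmb) T.1
  have hentry (T) (μ : DegreeExponent (Fin (n + 1)) m) :
      eval v (eigenvectorMatrix R a m i S (T, μ)) = form T v * eval v (monomial μ.1 1) := by
    have hform : ∑ j, v j * form T (Pi.single j 1) = form T v := by
      conv_rhs => rw [← (Pi.basisFun R _).sum_repr v]
      simp only [map_sum, map_smul, Pi.basisFun_repr, Pi.basisFun_apply, smul_eq_mul]
    rw [← hform]
    simp [eigenvectorMatrix, form, mul_comm]
  have heval (T) : eval v (q T) =
      ∑ μ : DegreeExponent (Fin (n + 1)) m, eval v (monomial μ.1 1) * coeff μ.1 (q T) := by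
    conv_lhs => rw [eq_sum_monomial_of_isHomogeneous (hq T)]
    simp [eval_monomial, mul_comm]
  calc ((eigenvectorMatrix R a m i).map (eval v) *ᵥ fun t => coeff t.2.1 (q t.1)) S
      = ∑ T, ∑ μ : DegreeExponent (Fin (n + 1)) m,
          form T v * eval v (monomial μ.1 1) * coeff μ.1 (q T) := by
        simp only [mulVec, dotProduct, Fintype.sum_prod_type, Matrix.map_apply, hentry]
    _ = ∑ T, eval v (q T) * form T v := by
        simp only [heval, Finset.sum_mul]
        exact Finset.sum_congr rfl fun T _ => Finset.sum_congr rfl fun μ _ => by ring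
    _ = 0 := sum_mul_wedgeContractionCoord_eq_zero _ h i _

theorem eigenvectorMatrix_submatrix_purePowerIndex (i : Fin (n + 1)) :
    (eigenvectorMatrix R a m i).submatrix id (purePowerIndex m i) =
      (X i ^ (m + 1) : MvPolynomial (Fin (n + 1)) R) • (1 : Matrix _ _ _) := by
  ext1 S T
  have hi : i ∉ T.1.map i.succAboveEmb := by simp [Fin.succAbove_ne]
  simp only [eigenvectorMatrix, purePowerIndex, Matrix.submatrix_apply, Matrix.of_apply, id_eq,
    wedgeContractionCoord_of_notMem _ _ hi, Finset.map_inj, ← Subtype.ext_iff, Matrix.smul_apply,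
    Matrix.one_apply]
  by_cases hTS : T = S
  · subst hTS
    simp [Pi.single_apply, X_pow_eq_monomial, pow_succ']
  · simp [hTS, Ne.symm hTS]

/-- Dehomogenisation with respect to `x_i`: the substitution `x_i = 1`, the other variables being
renumbered by `Fin n`. -/
noncomputable def dehomogenize (i : Fin (n + 1)) :
    MvPolynomial (Fin (n + 1)) R →ₐ[R] MvPolynomial (Fin n) R :=
  bind₁ (i.insertNth 1 X)

theorem dehomogenize_X_self (i : Fin (n + 1)) :
    dehomogenize i (X i : MvPolynomial (Fin (n + 1)) R) = 1 := by
  simp [dehomogenize]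

theorem eval_dehomogenize_of_apply_eq_one {i : Fin (n + 1)} {v : Fin (n + 1) → R} (hv : v i = 1)
    (p : MvPolynomial (Fin (n + 1)) R) :
    eval (i.removeNth v) (dehomogenize i p) = eval v p := by
  have hX : (fun j => aeval (i.removeNth v)
      ((i.insertNth 1 X : Fin (n + 1) → MvPolynomial (Fin n) R) j)) = v :=
    funext <| (Fin.forall_iff_succAbove i).mpr (by simp [hv, Fin.removeNth])
  rw [dehomogenize, ← aeval_eq_eval, aeval_bind₁, hX, aeval_eq_eval]

theorem eigenvectorMatrix_map_dehomogenize_submatrix (i : Fin (n + 1)) :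
    ((eigenvectorMatrix R a m i).map (dehomogenize i)).submatrix id (purePowerIndex m i) = 1 := by
  rw [Matrix.submatrix_map, eigenvectorMatrix_submatrix_purePowerIndex]
  ext1 S T
  simp [Matrix.one_apply, dehomogenize_X_self, apply_ite (dehomogenize i)]

theorem exists_ne_zero_eval_coeff_eq_zero_of_apply_eq_one [IsDomain R] (m : ℕ)
    (h : n < n.choose a) (i : Fin (n + 1)) :
    ∃ D : MvPolynomial
        ({S : Finset (Fin (n + 1)) // S.card = a} × DegreeExponent (Fin (n + 1)) m) R,
      D ≠ 0 ∧
      ∀ q : {S : Finset (Fin (n + 1)) // S.card = a} → MvPolynomial (Fin (n + 1)) R,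
        (∀ S, (q S).IsHomogeneous m) →
        ∀ v : Fin (n + 1) → R, v i = 1 → tensorValue q v * ι R v = 0 →
          eval (fun t => coeff t.2.1 (q t.1)) D = 0 := by
  have := Fintype.ofFinite (DegreeExponent (Fin (n + 1)) m)
  have hcard : Nat.card (Fin n) < Nat.card {S : Finset (Fin n) // S.card = a} := by
    rwa [Nat.card_fin, Nat.card_eq_fintype_card, Fintype.card_finset_len, Fintype.card_fin]
  obtain ⟨D, hD, hDA⟩ := exists_ne_zero_eval_eq_zero_of_submatrix_eq_one hcard
    (eigenvectorMatrix_map_dehomogenize_submatrix (R := R) (m := m) i)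
  refine ⟨D, hD, fun q hq v hvi hv => hDA _ (i.removeNth v) ?_⟩
  have hchart : ((eigenvectorMatrix R a m i).map (dehomogenize i)).map (eval (i.removeNth v)) =
      (eigenvectorMatrix R a m i).map (eval v) := by
    ext1 S t
    exact eval_dehomogenize_of_apply_eq_one hvi _
  rw [hchart]
  exact eigenvectorMatrix_mulVec_coeff_eq_zero hq hv i

theorem statement10_general {K : Type*} [Field K] (m : ℕ) (h : n < n.choose a) :
    ∃ D : MvPolynomial
        ({S : Finset (Fin (n + 1)) // S.card = a} × DegreeExponent (Fin (n + 1)) m) K,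
      D ≠ 0 ∧
      ∀ q : {S : Finset (Fin (n + 1)) // S.card = a} → MvPolynomial (Fin (n + 1)) K,
        (∀ S, (q S).IsHomogeneous m) →
        eval (fun t => coeff t.2.1 (q t.1)) D ≠ 0 →
        ∀ v : Fin (n + 1) → K, v ≠ 0 → tensorValue q v * ι K v ≠ 0 := by
  choose D hD hDq using
    exists_ne_zero_eval_coeff_eq_zero_of_apply_eq_one (R := K) (a := a) m h
  refine ⟨∏ i, D i, Finset.prod_ne_zero_iff.mpr fun i _ => hD i, fun q hq hne v hv hqv => ?_⟩
  obtain ⟨i, hi⟩ := Function.ne_iff.mp hv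
  rw [map_prod, Finset.prod_ne_zero_iff] at hne
  refine hne i (Finset.mem_univ i) (hDq i q hq ((v i)⁻¹ • v) (inv_mul_cancel₀ hi) ?_)
  rw [tensorValue_smul hq, map_smul, smul_mul_smul_comm, hqv, smul_zero]

end EigenvectorEquations

theorem mul_lt_add_choose (a b : ℕ) : a * b < (a + b).choose a := by
  induction a generalizing b with
  | zero => simp
  | succ a iha =>
    induction b with
    | zero => simp
    | succ b ihb =>
      have ha := iha (b + 1)
      rw [← add_assoc, Nat.add_right_comm] at ha
      rw [← add_assoc, Nat.choose_succ_succ']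
      nlinarith

theorem lt_choose_of_two_le {n a : ℕ} (ha : 2 ≤ a) (han : a + 2 ≤ n) : n < n.choose a := by
  obtain ⟨b, rfl⟩ := Nat.exists_eq_add_of_le (by omega : a ≤ n)
  calc a + b ≤ a * b := Nat.add_le_mul ha (by omega)
    _ < (a + b).choose a := mul_lt_add_choose a b

theorem eWedge_eq_basis {k : ℕ} (S : Finset (Fin k)) :
    eWedge k S = (Pi.basisFun ℂ (Fin k)).ExteriorAlgebra S := by
  have hsort : S.sort (· ≤ ·) = List.ofFn (S.orderEmbOfFin rfl) :=
    List.ext_getElem (by simp) fun l _ _ => by simp [Finset.orderEmbOfFin_apply]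
  rw [eWedge, hsort, List.map_ofFn, basis_apply_ofCard _ rfl, ιMulti_family, ιMulti_apply]
  simp [Function.comp_def, Set.powersetCard.ofFinEmbEquiv_symm_apply]

theorem tval_eq_tensorValue {k a : ℕ}
    (q : {S : Finset (Fin k) // S.card = a} → MvPolynomial (Fin k) ℂ) (v : Fin k → ℂ) :
    tval k a q v = tensorValue q v := by
  simp only [tval, tensorValue, eWedge_eq_basis]

/-- **No eigenvectors in middle degrees** (part of Theorem 3.3): for `n ≥ 4`,
`2 ≤ a ≤ n−2`, `m ≥ 1`, a general tensor `M ∈ Hom(S^mℂ^{n+1}, Λ^aℂ^{n+1})`,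
represented by its component polynomials `(q_S)_{|S|=a}` homogeneous of degree `m`,
has no eigenvectors: there is no nonzero `v` with `M(v^m) ∧ v = 0` in `Λ^{a+1}ℂ^{n+1}`. -/
theorem statement10 (n a m : ℕ) (hn : 4 ≤ n) (ha2 : 2 ≤ a) (han : a ≤ n - 2)
    (hm : 1 ≤ m) :
    ∃ D : MvPolynomial
        ({S : Finset (Fin (n+1)) // S.card = a} ×
          {μ : Fin (n+1) →₀ ℕ // (μ.sum fun _ e => e) = m}) ℂ,
      D ≠ 0 ∧
      ∀ q : {S : Finset (Fin (n+1)) // S.card = a} → MvPolynomial (Fin (n+1)) ℂ,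
        (∀ S, (q S).IsHomogeneous m) →
        MvPolynomial.eval (fun t => MvPolynomial.coeff t.2.1 (q t.1)) D ≠ 0 →
        ∀ v : Fin (n+1) → ℂ, v ≠ 0 →
          tval (n+1) a q v * ExteriorAlgebra.ι ℂ v ≠ 0 := by
  simpa only [tval_eq_tensorValue] using
    statement10_general m (lt_choose_of_two_le ha2 (by omega : a + 2 ≤ n))
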